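/- arXiv:1209.6005 — 2 statements merged into one kernel-verified Lean document; each statement's English description precedes it below -/
import Mathlib

section
/- The closure of the torsion subgroup of the profinite group Ẑ^× = ∏_p Z_p^× equals T_Q = ∏_p T_p, the quotient Ẑ^×/T_Q is a free Ẑ-module of rank 1, and there is an isomorphism of topological groups Ẑ^× ≅ T_Q × Ẑ. -/
instance (p : Nat.Primes) : Fact (p : ℕ).Prime := ⟨p.2⟩

/-- `Ẑ = ∏_p ℤ_p`, the profinite completion of `ℤ`, as an additive topological group. -/
abbrev ZHat : Type := Π p : Nat.Primes, ℤ_[(p : ℕ)]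

/-- `Ẑˣ = ∏_p ℤ_pˣ`, with the product topology. -/
abbrev ZHatUnits : Type := Π p : Nat.Primes, ℤ_[(p : ℕ)]ˣ

/-- `T_ℚ = ∏_p T_p`, the product of the torsion subgroups `T_p ⊆ ℤ_pˣ`. -/
noncomputable def TQ : Subgroup ZHatUnits :=
  Subgroup.pi Set.univ fun p => CommGroup.torsion ℤ_[(p : ℕ)]ˣ

open Filter Topology

theorem isometry_compact_surj {X : Type*} [MetricSpace X] [CompactSpace X] (f : X → X)
    (hf : Isometry f) : Function.Surjective f := by
  intro x
  by_contra hx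
  have hcl : IsClosed (Set.range f) := (isCompact_range hf.continuous).isClosed
  have hx' : x ∈ (Set.range f)ᶜ := hx
  obtain ⟨ε, hε, hb⟩ := Metric.isOpen_iff.mp hcl.isOpen_compl x hx'
  have h1 : ∀ y, ε ≤ dist (f y) x := by
    intro y
    by_contra h
    exact hb (Metric.mem_ball.mpr (not_le.mp h)) ⟨y, rfl⟩
  have h2 : ∀ m k : ℕ, ε ≤ dist (f^[m + (k+1)] x) (f^[m] x) := by
    intro m k
    have hit : ∀ (m : ℕ) (y z : X), dist (f^[m] y) (f^[m] z) = dist y z := by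
      intro m
      induction m with
      | zero => intro y z; rfl
      | succ m ih => intro y z; rw [Function.iterate_succ_apply, Function.iterate_succ_apply, ih,
          hf.dist_eq]
    rw [Function.iterate_add_apply, hit, Function.iterate_succ_apply']
    exact h1 _
  obtain ⟨a, φ, hφ, ha⟩ := CompactSpace.tendsto_subseq (fun n => f^[n] x)
  obtain ⟨N, hN⟩ := Metric.cauchySeq_iff'.mp ha.cauchySeq ε hε
  have h3 := hN (N+1) (Nat.le_succ N)
  have h4 : φ N < φ (N+1) := hφ (Nat.lt_succ_self N)
  obtain ⟨k, hk⟩ := Nat.exists_eq_add_of_lt h4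
  have := h2 (φ N) k
  simp only [Function.comp] at h3
  rw [hk] at h3
  rw [add_assoc] at h3
  exact absurd h3 (not_lt.mpr this)

theorem norm_int_le_of_emult {p : ℕ} [Fact p.Prime] {a b : ℤ} (hb : b ≠ 0)
    (h : emultiplicity (p : ℤ) b ≤ emultiplicity (p : ℤ) a) : ‖(a : ℤ_[p])‖ ≤ ‖(b : ℤ_[p])‖ := by
  have hb' : (b : ℤ_[p]) ≠ 0 := by exact_mod_cast hb
  rw [PadicInt.norm_eq_zpow_neg_valuation hb', PadicInt.norm_int_le_pow_iff_dvd]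
  have : ((p ^ (b : ℤ_[p]).valuation : ℕ) : ℤ) ∣ b := by
    have := PadicInt.norm_int_le_pow_iff_dvd (p := p) (k := b) (n := (b : ℤ_[p]).valuation)
    push_cast
    rw [← this, PadicInt.norm_eq_zpow_neg_valuation hb']
  push_cast at this
  exact pow_dvd_of_le_emultiplicity ((le_emultiplicity_of_pow_dvd this).trans h)

theorem norm_int_eq_of_emult {p : ℕ} [Fact p.Prime] {a b : ℤ} (ha : a ≠ 0) (hb : b ≠ 0)
    (h : emultiplicity (p : ℤ) a = emultiplicity (p : ℤ) b) : ‖(a : ℤ_[p])‖ = ‖(b : ℤ_[p])‖ :=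
  le_antisymm (norm_int_le_of_emult hb h.ge) (norm_int_le_of_emult ha h.le)

theorem norm_pow_sub_one {p : ℕ} [Fact p.Prime] (j : ℕ) (hj : j ≠ 0) (h : p = 2 → 2 ≤ j) (n : ℕ) :
    ‖((1 + (p : ℤ_[p]) ^ j) ^ n - 1)‖ = ‖(p : ℤ_[p]) ^ j‖ * ‖(n : ℤ_[p])‖ := by
  rcases Nat.eq_zero_or_pos n with rfl | hn
  · simp
  have hp : p.Prime := Fact.out
  have hpz : Prime (p : ℤ) := Nat.prime_iff_prime_int.mp hp
  have hdvd : (p : ℤ) ∣ (p : ℤ) ^ j := dvd_pow_self _ hj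
  have hnd : ¬ (p : ℤ) ∣ 1 + (p : ℤ) ^ j := by
    intro hh
    exact hpz.not_dvd_one ((dvd_add_left hdvd).mp hh)
  have hpj : 0 < (p : ℤ) ^ j := pow_pos (by exact_mod_cast hp.pos) _
  have key : emultiplicity (p : ℤ) ((1 + (p : ℤ) ^ j) ^ n - 1) =
      emultiplicity (p : ℤ) ((p : ℤ) ^ j * n) := by
    rw [emultiplicity_mul hpz]
    by_cases h2 : p = 2
    · subst h2
      have := Int.two_pow_sub_pow' (x := 1 + (2 : ℤ) ^ j) (y := 1) n
        (by rw [add_sub_cancel_left]; exact pow_dvd_pow 2 (h rfl)) (by exact_mod_cast hnd)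
      simpa using this
    · have := Int.emultiplicity_pow_sub_pow hp (hp.odd_of_ne_two h2) (x := 1 + (p : ℤ) ^ j) (y := 1)
        (by rwa [add_sub_cancel_left]) hnd n
      rw [one_pow, add_sub_cancel_left] at this
      rw [this, Int.natCast_emultiplicity]
  have hne : (1 + (p : ℤ) ^ j) ^ n - 1 ≠ 0 := by
    have : 1 < (1 + (p : ℤ) ^ j) ^ n := one_lt_pow₀ (by linarith) hn.ne'
    linarith
  have := norm_int_eq_of_emult hne (by positivity) key
  rw [← norm_mul]
  exact_mod_cast this

theorem local_exp (p : ℕ) [Fact p.Prime] (j : ℕ) (hj : j ≠ 0) (h : p = 2 → 2 ≤ j) :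
    ∃ E : Multiplicative ℤ_[p] →* ℤ_[p]ˣ, Continuous E ∧ Function.Injective E ∧
      ∀ u : ℤ_[p]ˣ, (p : ℤ_[p]) ^ j ∣ (u : ℤ_[p]) - 1 → ∃ a, E a = u := by
  have hp : p.Prime := Fact.out
  have hq0 : (p : ℤ_[p]) ^ j ≠ 0 := pow_ne_zero _ (by exact_mod_cast hp.ne_zero)
  have hq : ‖(p : ℤ_[p]) ^ j‖ < 1 := by
    rw [norm_pow]; exact pow_lt_one₀ (norm_nonneg _) (PadicInt.norm_natCast_lt_one_iff.mpr dvd_rfl) hj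
  have hr := tendsto_pow_atTop_nhds_zero_iff_norm_lt_one.mpr hq
  set κ : AddChar ℤ_[p] ℤ_[p] := PadicInt.addChar_of_value_at_one _ hr with hκ
  have hc : Continuous κ := PadicInt.continuous_addChar_of_value_at_one hr
  have hnat : ∀ n : ℕ, κ n = (1 + (p : ℤ_[p]) ^ j) ^ n := by
    intro n
    rw [← PadicInt.addChar_of_value_at_one_def (p := p) hr, ← AddChar.map_nsmul_eq_pow]
    simp [hκ]
  have hnorm : ∀ a, ‖κ a - 1‖ = ‖(p : ℤ_[p]) ^ j‖ * ‖a‖ := by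
    intro a
    refine congr_fun (PadicInt.denseRange_natCast.equalizer (g := fun a => ‖κ a - 1‖)
      (h := fun a => ‖(p : ℤ_[p]) ^ j‖ * ‖a‖) (by fun_prop) (by fun_prop) (funext fun n => ?_)) a
    simp only [Function.comp]
    rw [hnat, norm_pow_sub_one j hj h]
  let E := κ.toMonoidHom.toHomUnits
  have hE : ∀ a, (E a : ℤ_[p]) = κ a.toAdd := fun a => rfl
  refine ⟨E, ?_, ?_, ?_⟩
  · rw [Units.continuous_iff]
    refine ⟨hc.comp continuous_toAdd, ?_⟩
    have : ∀ a, ((E a)⁻¹ : ℤ_[p]ˣ) = E a⁻¹ := fun a => (map_inv E a).symm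
    simp only [this]
    exact hc.comp (continuous_toAdd.comp continuous_inv)
  · rw [injective_iff_map_eq_one]
    intro a ha
    have h1 := hnorm a.toAdd
    rw [← hE, ha] at h1
    simp only [Units.val_one, sub_self, norm_zero] at h1
    have : ‖a.toAdd‖ = 0 := by
      rcases mul_eq_zero.mp h1.symm with h2 | h2
      · exact absurd (norm_eq_zero.mp h2) hq0
      · exact h2
    exact toAdd_eq_zero.mp (norm_eq_zero.mp this)
  · have hex : ∀ a, ∃ c, κ a = 1 + (p : ℤ_[p]) ^ j * c := by
      intro a
      have : κ a - 1 ∈ Ideal.span {(p : ℤ_[p]) ^ j} := by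
        rw [← PadicInt.norm_le_pow_iff_mem_span_pow, hnorm, ← PadicInt.norm_p_pow]
        exact mul_le_of_le_one_right (norm_nonneg _) (PadicInt.norm_le_one a)
      obtain ⟨c, hc⟩ := Ideal.mem_span_singleton.mp this
      exact ⟨c, by rw [← hc]; ring⟩
    choose f hf using hex
    have hiso : Isometry f := by
      refine Isometry.of_dist_eq fun a b => ?_
      rw [dist_eq_norm, dist_eq_norm]
      have h1 : κ a - κ b = κ b * (κ (a - b) - 1) := by
        rw [mul_sub, ← AddChar.map_add_eq_mul]; simp
      have h2 : ‖κ b‖ = 1 := PadicInt.norm_units (E (Multiplicative.ofAdd b))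
      have h3 : ‖κ a - κ b‖ = ‖(p : ℤ_[p]) ^ j‖ * ‖a - b‖ := by
        rw [h1, norm_mul, h2, one_mul, hnorm]
      rw [hf a, hf b, add_sub_add_left_eq_sub, ← mul_sub, norm_mul] at h3
      exact mul_left_cancel₀ (norm_ne_zero_iff.mpr hq0) h3
    rintro u ⟨c, hcu⟩
    obtain ⟨a, rfl⟩ := isometry_compact_surj f hiso c
    refine ⟨Multiplicative.ofAdd a, Units.ext ?_⟩
    rw [hE, toAdd_ofAdd, hf, ← hcu]; ring

theorem local_decomp (p : ℕ) [Fact p.Prime] :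
    ∃ (E : Multiplicative ℤ_[p] →* ℤ_[p]ˣ) (m : ℕ), 0 < m ∧ Continuous E ∧ Function.Injective E ∧
      ∀ u : ℤ_[p]ˣ, ∃ t a, t ^ m = 1 ∧ t * E a = u := by
  have hp : p.Prime := Fact.out
  by_cases h2 : p = 2
  · subst h2
    obtain ⟨E, hc, hi, hs⟩ := local_exp 2 2 (by norm_num) (by norm_num)
    refine ⟨E, 2, by norm_num, hc, hi, fun u => ?_⟩
    have hu : PadicInt.toZModPow 2 (u : ℤ_[2]) = 1 ∨ PadicInt.toZModPow 2 (u : ℤ_[2]) = -1 := by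
      have h1 : IsUnit (PadicInt.toZModPow 2 (u : ℤ_[2])) := u.isUnit.map _
      have h3 : ∀ x : ZMod (2^2), IsUnit x → x = 1 ∨ x = -1 := by decide
      exact h3 _ h1
    have key : ∀ v : ℤ_[2]ˣ, PadicInt.toZModPow 2 (v : ℤ_[2]) = 1 → ∃ a, E a = v := by
      intro v hv
      apply hs
      rw [← Ideal.mem_span_singleton, ← PadicInt.ker_toZModPow, RingHom.mem_ker, map_sub, hv]
      simp
    rcases hu with hu | hu
    · obtain ⟨a, ha⟩ := key u hu
      exact ⟨1, a, by simp, by simp [ha]⟩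
    · obtain ⟨a, ha⟩ := key (-u) (by rw [Units.val_neg, map_neg, hu, neg_neg])
      exact ⟨-1, a, by simp, by simp [ha]⟩
  · obtain ⟨E, hc, hi, hs⟩ := local_exp p 1 (by norm_num) (fun h => absurd h h2)
    refine ⟨E, p - 1, Nat.sub_pos_of_lt hp.one_lt, hc, hi, fun u => ?_⟩
    obtain ⟨b, hb⟩ := hs (u ^ (p - 1)) (by
      rw [pow_one, ← Ideal.mem_span_singleton, ← PadicInt.maximalIdeal_eq_span_p,
        ← PadicInt.ker_toZMod, RingHom.mem_ker, map_sub, Units.val_pow_eq_pow_val, map_pow,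
        ZMod.pow_card_sub_one_eq_one (u.isUnit.map _).ne_zero, map_one, sub_self])
    have hun : IsUnit ((p - 1 : ℕ) : ℤ_[p]) := by
      rw [PadicInt.isUnit_iff, PadicInt.norm_natCast_eq_one_iff]
      exact (Nat.coprime_self_sub_right hp.one_le).mpr (Nat.coprime_one_right p)
    obtain ⟨w, hw⟩ := hun
    let a : Multiplicative ℤ_[p] := Multiplicative.ofAdd (↑w⁻¹ * b.toAdd)
    have ha : a ^ (p - 1) = b := by
      apply Multiplicative.toAdd.injective
      rw [toAdd_pow, toAdd_ofAdd, nsmul_eq_mul, ← hw, ← mul_assoc, Units.mul_inv, one_mul]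
    refine ⟨u * (E a)⁻¹, a, ?_, by simp⟩
    rw [mul_pow, inv_pow, ← map_pow, ha, hb, mul_inv_cancel]
/-- The closure of the torsion subgroup of `Ẑˣ = ∏_p ℤ_pˣ` equals `T_ℚ = ∏_p T_p`,
the quotient `Ẑˣ/T_ℚ` is a free `Ẑ`-module of rank 1 (i.e. isomorphic to `Ẑ` as a
topological group), and `Ẑˣ ≅ T_ℚ × Ẑ` as topological groups. -/
theorem closure_torsion_eq_TQ_and_quotient_free_rank_one_and_units_iso :
    (CommGroup.torsion ZHatUnits).topologicalClosure = TQ ∧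
    (∃ e : Additive (ZHatUnits ⧸ TQ) ≃+ ZHat, Continuous e ∧ Continuous e.symm) ∧
    (∃ e : ZHatUnits ≃* TQ × Multiplicative ZHat, Continuous e ∧ Continuous e.symm) := by
  classical
  choose E m hm hc hi hs using fun p : Nat.Primes => local_decomp (p : ℕ)
  have hEtor : ∀ p a, IsOfFinOrder (E p a) → a = 1 := by
    intro p a h
    obtain ⟨n, hn, h1⟩ := isOfFinOrder_iff_pow_eq_one.mp h
    rw [← map_pow] at h1
    have h2 : a ^ n = 1 := hi p (by rw [h1, map_one])
    have h3 : n • a.toAdd = 0 := by rw [← toAdd_pow, h2, toAdd_one]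
    rw [nsmul_eq_mul, mul_eq_zero] at h3
    rcases h3 with h3 | h3
    · exact absurd (Nat.cast_eq_zero.mp h3) hn.ne'
    · exact toAdd_eq_zero.mp h3
  have htor : ∀ (p : Nat.Primes) (t : ℤ_[(p : ℕ)]ˣ),
      t ∈ CommGroup.torsion ℤ_[(p : ℕ)]ˣ ↔ t ^ m p = 1 := by
    intro p t
    constructor
    · intro ht
      obtain ⟨s, a, hs1, hs2⟩ := hs p t
      have hsT : s ∈ CommGroup.torsion ℤ_[(p : ℕ)]ˣ :=
        isOfFinOrder_iff_pow_eq_one.mpr ⟨m p, hm p, hs1⟩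
      have : E p a ∈ CommGroup.torsion ℤ_[(p : ℕ)]ˣ := by
        have h1 : E p a = s⁻¹ * t := by rw [← hs2]; simp
        rw [h1]
        exact mul_mem (inv_mem hsT) ht
      rw [hEtor p a this, map_one, mul_one] at hs2
      rw [← hs2, hs1]
    · intro ht
      exact isOfFinOrder_iff_pow_eq_one.mpr ⟨m p, hm p, ht⟩
  have hTQ : ∀ t : ZHatUnits, t ∈ TQ ↔ ∀ p : Nat.Primes, t p ∈ CommGroup.torsion ℤ_[(p : ℕ)]ˣ := by
    intro t
    simp [TQ, Subgroup.mem_pi]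
  have hcl : IsClosed (TQ : Set ZHatUnits) := by
    have : (TQ : Set ZHatUnits) = ⋂ p, {t : ZHatUnits | t p ^ m p = 1} := by
      ext t
      simp only [SetLike.mem_coe, hTQ, htor, Set.mem_iInter, Set.mem_ofPred_eq]
    rw [this]
    exact isClosed_iInter fun p => isClosed_eq (by fun_prop) continuous_const
  have : CompactSpace TQ := isCompact_iff_compactSpace.mp hcl.isCompact
  have : CompactSpace (Multiplicative ZHat) := inferInstanceAs (CompactSpace ZHat)
  let ψ : Multiplicative ZHat →* ZHatUnits :=
    { toFun := fun a p => E p (Multiplicative.ofAdd (a.toAdd p))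
      map_one' := by
        funext p
        exact map_one (E p)
      map_mul' := fun a b => by
        funext p
        exact map_mul (E p) (Multiplicative.ofAdd (a.toAdd p)) (Multiplicative.ofAdd (b.toAdd p)) }
  have hψ : Continuous ψ := by
    refine continuous_pi fun p => (hc p).comp (continuous_ofAdd.comp ?_)
    exact (continuous_apply p).comp continuous_toAdd
  let Φ : TQ × Multiplicative ZHat →* ZHatUnits := MonoidHom.coprod TQ.subtype ψ
  have hΦa : ∀ x, Φ x = (x.1 : ZHatUnits) * ψ x.2 := fun x => rfl
  have hΦc : Continuous Φ := by
    have : (Φ : TQ × Multiplicative ZHat → ZHatUnits) = fun x => (x.1 : ZHatUnits) * ψ x.2 := rfl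
    rw [this]
    exact (continuous_subtype_val.comp continuous_fst).mul (hψ.comp continuous_snd)
  have hΦi : Function.Injective Φ := by
    rw [injective_iff_map_eq_one]
    rintro ⟨t, a⟩ h
    rw [hΦa] at h
    have hψT : ψ a ∈ TQ := by
      rw [eq_inv_of_mul_eq_one_right h]
      exact inv_mem t.2
    have ha : a = 1 := by
      apply Multiplicative.toAdd.injective
      funext p
      have := hEtor p _ ((hTQ _).mp hψT p)
      exact ofAdd_eq_one.mp this
    subst ha
    simp only [map_one, mul_one] at h
    exact Prod.ext (Subtype.ext h) rfl
  have hΦs : Function.Surjective Φ := by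
    intro u
    choose t a ht hta using fun p => hs p (u p)
    refine ⟨(⟨t, (hTQ t).mpr fun p => (htor p _).mpr (ht p)⟩,
      Multiplicative.ofAdd fun p => (a p).toAdd), ?_⟩
    funext p
    exact hta p
  let e := MulEquiv.ofBijective Φ ⟨hΦi, hΦs⟩
  have he : Continuous e := hΦc
  have hes : Continuous e.symm := he.continuous_symm_of_equiv_compact_to_t2 (f := e.toEquiv)
  refine ⟨le_antisymm ?_ ?_, ?_, e.symm, hes, he⟩
  · refine Subgroup.topologicalClosure_minimal _ (fun t ht => ?_) hcl
    rw [hTQ]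
    intro p
    exact MonoidHom.isOfFinOrder (Pi.evalMonoidHom (fun p : Nat.Primes => ℤ_[(p : ℕ)]ˣ) p) ht
  · intro t ht
    rw [hTQ] at ht
    have hlim : Tendsto (fun F : Finset Nat.Primes => fun p => if p ∈ F then t p else 1)
        atTop (𝓝 t) := by
      rw [tendsto_pi_nhds]
      intro p
      refine tendsto_const_nhds.congr' ?_
      filter_upwards [eventually_ge_atTop {p}] with F hF
      rw [if_pos (hF (Finset.mem_singleton_self p))]
    refine mem_closure_of_tendsto hlim (Eventually.of_forall fun F => ?_)
    refine isOfFinOrder_iff_pow_eq_one.mpr ⟨∏ p ∈ F, m p, Finset.prod_pos fun p _ => hm p, ?_⟩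
    funext p
    simp only [Pi.pow_apply, Pi.one_apply]
    split_ifs with hp
    · obtain ⟨k, hk⟩ := Finset.dvd_prod_of_mem m hp
      rw [hk, pow_mul, (htor p _).mp (ht p), one_pow]
    · exact one_pow _
  · let π : ZHatUnits →* Multiplicative ZHat := (MonoidHom.snd _ _).comp e.symm.toMonoidHom
    have hπ : Continuous π := continuous_snd.comp hes
    have hπs : Function.Surjective π := by
      intro a
      exact ⟨e (1, a), by simp [π]⟩
    have hker : ∀ u, π u = 1 ↔ u ∈ TQ := by
      intro u
      obtain ⟨⟨t, a⟩, rfl⟩ := e.surjective u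
      have h1 : π (e (t, a)) = a := by simp [π]
      rw [h1]
      have h2 : e (t, a) = (t : ZHatUnits) * ψ a := rfl
      constructor
      · rintro rfl
        rw [h2, map_one, mul_one]
        exact t.2
      · intro h
        have h3 : e (⟨_, h⟩, 1) = e (t, a) := by
          have h4 : e (⟨_, h⟩, 1) = e (t, a) * ψ 1 := rfl
          rw [h4, map_one, mul_one]
        exact (Prod.ext_iff.mp (e.injective h3)).2.symm
    let L : ZHatUnits ⧸ TQ →* Multiplicative ZHat :=
      QuotientGroup.lift TQ π fun u hu => (hker u).mpr hu
    have hL : Continuous L := hπ.quotient_lift _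
    have hLi : Function.Injective L := by
      rw [injective_iff_map_eq_one]
      intro x
      induction x using QuotientGroup.induction_on with
      | H u =>
        intro h
        exact (QuotientGroup.eq_one_iff u).mpr ((hker u).mp h)
    have hLs : Function.Surjective L := by
      intro a
      obtain ⟨u, hu⟩ := hπs a
      exact ⟨QuotientGroup.mk u, hu⟩
    let e' := MulEquiv.ofBijective L ⟨hLi, hLs⟩
    have : T2Space (Multiplicative ZHat) := inferInstanceAs (T2Space ZHat)
    have he' : Continuous e' := hL
    have hes' : Continuous e'.symm := he'.continuous_symm_of_equiv_compact_to_t2 (f := e'.toEquiv)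
    refine ⟨MulEquiv.toAdditiveLeft e', ?_, ?_⟩
    · exact continuous_toAdd.comp (he'.comp continuous_toMul)
    · exact continuous_ofMul.comp (hes'.comp continuous_ofAdd)
end

section
/- There is an isomorphism of topological groups ∏_p T_p ≅ ∏_{n≥1} Z/nZ, where the left product is over all prime numbers p and the right product is over all positive integers n, both carrying the product topology. -/
lemma aux_reindex {I J : Type*} (σ : I ≃ J) (f : I → ℕ) (f' : J → ℕ) (h : ∀ i, f' (σ i) = f i) :
    Nonempty ((Π i, ZMod (f i)) ≃ₜ+ Π j, ZMod (f' j)) := by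
  obtain rfl : (fun i => f' (σ i)) = f := funext h
  exact ⟨ContinuousAddEquiv.symm { (Homeomorph.piCongrLeft (Y := fun j => ZMod (f' j)) σ).symm with map_add' := fun _ _ => rfl }⟩

abbrev AuxI {ι : Type*} (m : ι → ℕ) := Σ i, (m i).primeFactors

abbrev auxF {ι : Type*} (m : ι → ℕ) (x : AuxI m) : ℕ := (x.2 : ℕ) ^ (m x.1).factorization x.2

lemma aux_split {ι : Type*} (m : ι → ℕ) (hm : ∀ i, m i ≠ 0) :
    Nonempty ((Π i, ZMod (m i)) ≃ₜ+ Π x : AuxI m, ZMod (auxF m x)) := by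
  refine ⟨{ toFun := fun v x => ZMod.equivPi _ (hm x.1) (v x.1) x.2
            invFun := fun w i => (ZMod.equivPi _ (hm i)).symm (fun q => w ⟨i, q⟩)
            left_inv := fun v => by
              funext i
              exact (ZMod.equivPi _ (hm i)).symm_apply_apply (v i)
            right_inv := fun w => by
              funext x
              exact congrFun ((ZMod.equivPi _ (hm x.1)).apply_symm_apply (fun q => w ⟨x.1, q⟩)) x.2
            map_add' := fun v w => by
              funext x
              simp
            continuous_toFun := ?_
            continuous_invFun := ?_ }⟩
  · refine continuous_pi fun x => ?_
    exact (continuous_of_discreteTopology (f := fun a : ZMod (m x.1) => ZMod.equivPi _ (hm x.1) a x.2)).comp (continuous_apply x.1)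
  · refine continuous_pi fun i => ?_
    have : DiscreteTopology (∀ q : (m i).primeFactors, ZMod ((q : ℕ) ^ (m i).factorization q)) := inferInstance
    exact (continuous_of_discreteTopology (f := (ZMod.equivPi _ (hm i)).symm)).comp
      (continuous_pi fun q => continuous_apply (⟨i, q⟩ : AuxI m))

lemma aux_fiber_infinite {ι : Type*} (m : ι → ℕ) 
    (h : ∀ q k : ℕ, q.Prime → 0 < k → {i | (m i).factorization q = k}.Infinite)
    (q k : ℕ) (hq : q.Prime) (hk : 0 < k) : Infinite {x : AuxI m // auxF m x = q ^ k} := by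
  have := (h q k hq hk).to_subtype
  have hmem : ∀ i : {i | (m i).factorization q = k}, q ∈ (m i).primeFactors := fun i => by
    rw [← Nat.support_factorization, Finsupp.mem_support_iff, show (m i).factorization q = k from i.2]
    omega
  refine Infinite.of_injective
    (fun i : {i | (m i).factorization q = k} =>
      (⟨⟨i, ⟨q, hmem i⟩⟩, by
        show q ^ (m i).factorization q = q ^ k
        rw [show (m i).factorization q = k from i.2]⟩ : {x : AuxI m // auxF m x = q ^ k})) ?_
  intro i j hij
  have := congrArg (fun x => x.1.1) hij
  exact Subtype.ext this

lemma aux_fiber_pp {ι : Type*} (m : ι → ℕ) (x : AuxI m) :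
    ∃ q k : ℕ, q.Prime ∧ 0 < k ∧ auxF m x = q ^ k := by
  refine ⟨x.2, _, Nat.prime_of_mem_primeFactors x.2.2, ?_, rfl⟩
  have h2 := x.2.2
  exact (Nat.prime_of_mem_primeFactors h2).factorization_pos_of_dvd
    (Nat.mem_primeFactors.mp h2).2.2 (Nat.dvd_of_mem_primeFactors h2)

lemma aux_equiv {ι κ : Type*} [Countable ι] [Countable κ] (m : ι → ℕ) (n : κ → ℕ)
    (hm : ∀ q k : ℕ, q.Prime → 0 < k → {i | (m i).factorization q = k}.Infinite)
    (hn : ∀ q k : ℕ, q.Prime → 0 < k → {i | (n i).factorization q = k}.Infinite) :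
    ∃ σ : AuxI m ≃ AuxI n, ∀ x, auxF n (σ x) = auxF m x := by
  have key : ∀ c : ℕ, Nonempty ({x : AuxI m // auxF m x = c} ≃ {x : AuxI n // auxF n x = c}) := by
    intro c
    by_cases hc : ∃ q k : ℕ, q.Prime ∧ 0 < k ∧ c = q ^ k
    · obtain ⟨q, k, hq, hk, rfl⟩ := hc
      have := aux_fiber_infinite m hm q k hq hk
      have := aux_fiber_infinite n hn q k hq hk
      exact nonempty_equiv_of_countable
    · have h1 : IsEmpty {x : AuxI m // auxF m x = c} :=
        ⟨fun x => hc (by obtain ⟨q, k, a, b, e⟩ := aux_fiber_pp m x.1; exact ⟨q, k, a, b, x.2 ▸ e⟩)⟩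
      have h2 : IsEmpty {x : AuxI n // auxF n x = c} :=
        ⟨fun x => hc (by obtain ⟨q, k, a, b, e⟩ := aux_fiber_pp n x.1; exact ⟨q, k, a, b, x.2 ▸ e⟩)⟩
      exact ⟨Equiv.equivOfIsEmpty _ _⟩
  exact ⟨Equiv.ofFiberEquiv fun c => (key c).some, fun x => Equiv.ofFiberEquiv_map _ x⟩

lemma aux_main {ι κ : Type*} [Countable ι] [Countable κ] (m : ι → ℕ) (n : κ → ℕ)
    (hm0 : ∀ i, m i ≠ 0) (hn0 : ∀ i, n i ≠ 0)
    (hm : ∀ q k : ℕ, q.Prime → 0 < k → {i | (m i).factorization q = k}.Infinite)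
    (hn : ∀ q k : ℕ, q.Prime → 0 < k → {i | (n i).factorization q = k}.Infinite) :
    Nonempty ((Π i, ZMod (m i)) ≃ₜ+ Π j, ZMod (n j)) := by
  obtain ⟨σ, hσ⟩ := aux_equiv m n hm hn
  obtain ⟨a⟩ := aux_split m hm0
  obtain ⟨b⟩ := aux_split n hn0
  obtain ⟨c⟩ := aux_reindex σ _ _ hσ
  exact ⟨(a.trans c).trans b.symm⟩

lemma aux_pnat (q k : ℕ) (hq : q.Prime) :
    {i : ℕ+ | (i : ℕ).factorization q = k}.Infinite := by
  refine Set.infinite_of_injective_forall_mem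
    (f := fun t : ℕ => (⟨q ^ k * (q * t + 1), by have := hq.pos; positivity⟩ : ℕ+)) ?_ ?_
  · intro a b hab
    have h := congrArg PNat.val hab
    have h1 : q ^ k * (q * a + 1) = q ^ k * (q * b + 1) := h
    have h2 := Nat.eq_of_mul_eq_mul_left (pow_pos hq.pos k) h1
    exact Nat.eq_of_mul_eq_mul_left hq.pos (by omega)
  · intro t
    show (q ^ k * (q * t + 1)).factorization q = k
    rw [Nat.factorization_mul (pow_ne_zero _ hq.ne_zero) (by omega), hq.factorization_pow]
    have : (q * t + 1).factorization q = 0 := by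
      apply Nat.factorization_eq_zero_of_not_dvd
      intro h
      exact hq.one_lt.ne' (Nat.dvd_one.mp ((Nat.dvd_add_right (Dvd.intro _ rfl)).mp h))
    simp [this]

lemma aux_primes (q k : ℕ) (hq : q.Prime) (hk : 0 < k) :
    {p : Nat.Primes | p.1 ≠ 2 ∧ (p.1 - 1).factorization q = k}.Infinite := by
  have hcop : (q ^ k + 1).Coprime (q ^ (k + 1)) := by
    apply Nat.Coprime.pow_right
    rw [Nat.coprime_comm, hq.coprime_iff_not_dvd]
    intro h
    exact hq.one_lt.ne' (Nat.dvd_one.mp ((Nat.dvd_add_right (dvd_pow_self q hk.ne')).mp h))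
  intro hfin
  obtain ⟨B, hB⟩ := (hfin.image (fun p : Nat.Primes => p.1)).bddAbove
  obtain ⟨p, hpB, hp, hmod⟩ := Nat.forall_exists_prime_gt_and_modEq (max B 2)
    (pow_ne_zero (k + 1) hq.ne_zero) hcop
  have hp2 : 2 < p := lt_of_le_of_lt (le_max_right _ _) hpB
  have hmem : (⟨p, hp⟩ : Nat.Primes) ∈
      {p : Nat.Primes | p.1 ≠ 2 ∧ (p.1 - 1).factorization q = k} := by
    refine ⟨hp2.ne', ?_⟩
    show (p - 1).factorization q = k
    have h0 : p - 1 ≡ q ^ k [MOD q ^ (k + 1)] := by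
      apply Nat.ModEq.add_right_cancel' 1
      rwa [Nat.sub_add_cancel (by omega)]
    have d1 : q ^ k ∣ p - 1 := 
      ((h0.of_dvd (pow_dvd_pow q (Nat.le_succ k))).dvd_iff dvd_rfl).mpr dvd_rfl
    have d2 : ¬ q ^ (k + 1) ∣ p - 1 := by
      rw [h0.dvd_iff dvd_rfl, Nat.pow_dvd_pow_iff_le_right hq.one_lt]
      omega
    rw [hq.pow_dvd_iff_le_factorization (by omega)] at d1 d2
    omega
  have := hB ⟨_, hmem, rfl⟩
  have h3 : B < p := lt_of_le_of_lt (le_max_left _ _) hpB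
  exact absurd this (not_le.mpr h3)

lemma aux_prime_step (p : ℕ) [hp : Fact p.Prime] (Q : ℤ_[p]) (hpQ : (p : ℤ_[p]) ∣ Q)
    (hQ : p = 2 → (p : ℤ_[p]) ^ 2 ∣ Q)
    (y : ℤ_[p]) (hy : Q ∣ y - 1) (l : ℕ) (hl : l.Prime) (h : y ^ l = 1) : y = 1 := by
  have hpp : Prime (p : ℤ_[p]) := PadicInt.prime_p
  have hgeom : (∑ i ∈ Finset.range l, y ^ i) * (y - 1) = 0 := by
    rw [geom_sum_mul, h, sub_self]
  rcases mul_eq_zero.mp hgeom with h0 | h0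
  swap
  · exact sub_eq_zero.mp h0
  exfalso
  have hpy : (p : ℤ_[p]) ∣ y - 1 := hpQ.trans hy
  by_cases hlp : l = p
  · subst hlp
    rcases hl.eq_two_or_odd' with h2 | hodd
    · obtain ⟨b, hb⟩ := (hQ h2).trans hy
      subst h2
      have h1 : (2 : ℤ_[2]) * (1 + 2 * b) = 0 := by
        rw [← h0]
        simp [Finset.sum_range_succ]
        have : y = 1 + 4 * b := by
          rw [sub_eq_iff_eq_add] at hb
          rw [hb]; push_cast; ring
        rw [this]; ring
      rcases mul_eq_zero.mp h1 with h3 | h3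
      · exact hpp.ne_zero (by exact_mod_cast h3)
      · apply hpp.not_isUnit
        apply isUnit_of_dvd_one
        refine ⟨-b, ?_⟩
        push_cast
        linear_combination h3
    · obtain ⟨b, hb⟩ := hpy
      have hyb : y = 1 + l * b := by linear_combination hb
      have hd := odd_sq_dvd_geom_sum₂_sub (1 : ℤ_[l]) b hodd
      simp only [one_pow, mul_one, ← hyb, h0, zero_sub, dvd_neg] at hd
      obtain ⟨c, hc⟩ := hd
      apply hpp.not_isUnit
      apply isUnit_of_dvd_one
      refine ⟨c, ?_⟩
      apply mul_left_cancel₀ hpp.ne_zero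
      linear_combination hc
  · have hx : ¬ (p : ℤ_[p]) ∣ y := by
      intro hd
      apply hpp.not_isUnit
      apply isUnit_of_dvd_one
      have := dvd_sub hd hpy
      simpa using this
    have hn : ¬ (p : ℤ_[p]) ∣ (l : ℤ_[p]) := by
      intro hd
      have h5 : ((p : ℤ) : ℤ_[p]) ^ 1 ∣ ((l : ℤ) : ℤ_[p]) := by simpa using hd
      have h6 : (p : ℤ) ∣ (l : ℤ) := by
        rw [← PadicInt.norm_int_lt_one_iff_dvd, PadicInt.norm_lt_one_iff_dvd]
        simpa using hd
      exact hlp ((Nat.prime_dvd_prime_iff_eq hp.out hl).mp (by exact_mod_cast h6)).symm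
    have := not_dvd_geom_sum₂ (n := l) hpp hpy hx hn
    apply this
    simp [h0]

lemma aux_torsionfree (p : ℕ) [hp : Fact p.Prime] (Q : ℤ_[p]) (hpQ : (p : ℤ_[p]) ∣ Q)
    (hQ : p = 2 → (p : ℤ_[p]) ^ 2 ∣ Q)
    (y : ℤ_[p]) (hy : Q ∣ y - 1) (n : ℕ) (hn : n ≠ 0) (h : y ^ n = 1) : y = 1 := by
  induction n using Nat.recOnMul generalizing y with
  | zero => exact absurd rfl hn
  | one => simpa using h
  | prime l hl => exact aux_prime_step p Q hpQ hQ y hy l hl h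
  | mul a b iha ihb =>
    rw [pow_mul] at h
    have h1 : Q ∣ y ^ a - 1 := hy.trans (sub_one_dvd_pow_sub_one y a)
    exact iha y hy (by rintro rfl; simp at hn) (ihb _ h1 (by rintro rfl; simp at hn) h)

lemma aux_inj (p : ℕ) [hp : Fact p.Prime] (k : ℕ) (hk : k ≠ 0) (hk2 : p = 2 → 2 ≤ k) :
    Function.Injective ((Units.map (PadicInt.toZModPow (p := p) k : ℤ_[p] →* ZMod (p ^ k))).comp
      (CommGroup.torsion ℤ_[p]ˣ).subtype) := by
  rw [injective_iff_map_eq_one]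
  rintro ⟨x, hx⟩ h
  have hx' : IsOfFinOrder x := hx
  obtain ⟨n, hn, hxn⟩ := isOfFinOrder_iff_pow_eq_one.mp hx'
  have h1 : PadicInt.toZModPow (p := p) k (x : ℤ_[p]) = 1 := congrArg Units.val h
  have h2 : (x : ℤ_[p]) - 1 ∈ RingHom.ker (PadicInt.toZModPow (p := p) k) := by
    rw [RingHom.mem_ker, map_sub, h1, map_one, sub_self]
  rw [PadicInt.ker_toZModPow, Ideal.mem_span_singleton] at h2
  apply Subtype.ext
  apply Units.ext
  exact aux_torsionfree p _ (dvd_pow_self _ hk) (fun h => pow_dvd_pow _ (hk2 h)) _ h2 n hn.ne'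
    (by rw [← Units.val_pow_eq_pow_val, hxn, Units.val_one])

lemma aux_finite (p : ℕ) [hp : Fact p.Prime] : Finite (CommGroup.torsion ℤ_[p]ˣ) := by
  have : NeZero (p ^ 2) := ⟨pow_ne_zero _ hp.out.ne_zero⟩
  exact Finite.of_injective _ (aux_inj p 2 (by norm_num) (fun _ => le_rfl))

lemma aux_surj (p : ℕ) [hp : Fact p.Prime] :
    Function.Surjective ((Units.map (PadicInt.toZModPow (p := p) 1 : ℤ_[p] →* ZMod (p ^ 1))).comp
      (CommGroup.torsion ℤ_[p]ˣ).subtype) := by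
  intro u
  have : NeZero (p ^ 1) := ⟨pow_ne_zero _ hp.out.ne_zero⟩
  have hp1 : p - 1 ≠ 0 := by have := hp.out.two_le; omega
  set φ := PadicInt.toZModPow (p := p) 1 with hφ
  have hker : ∀ z : ℤ_[p], φ z = 0 ↔ ‖z‖ < 1 := by
    intro z
    rw [← RingHom.mem_ker, PadicInt.ker_toZModPow, Ideal.mem_span_singleton,
      PadicInt.norm_lt_one_iff_dvd, pow_one]
  obtain ⟨a, ha⟩ : ∃ a : ℤ_[p], φ a = u := ⟨((u : ZMod (p ^ 1)).val : ℤ_[p]), by simp⟩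
  have hu : (u : ZMod (p ^ 1)) ^ (p - 1) = 1 := by
    have := ZMod.pow_totient u
    rw [show (p ^ 1).totient = p - 1 by rw [pow_one, Nat.totient_prime hp.out]] at this
    rw [← Units.val_pow_eq_pow_val, this, Units.val_one]
  have hF : ‖a ^ (p - 1) - 1‖ < 1 := by
    rw [← hker, map_sub, map_pow, ha, hu, map_one, sub_self]
  have : Nontrivial (ZMod (p ^ 1)) := by
    rw [pow_one]; infer_instance
  have hna : ‖a‖ = 1 := by
    refine le_antisymm (PadicInt.norm_le_one a) (not_lt.mp fun h => ?_)
    rw [← hker, ha] at h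
    exact u.ne_zero h
  have hnp : ‖((p - 1 : ℕ) : ℤ_[p])‖ = 1 := by
    refine le_antisymm (PadicInt.norm_le_one _) (not_lt.mp fun h => ?_)
    have h' : ‖(((p - 1 : ℕ) : ℤ) : ℤ_[p])‖ < 1 := by simpa using h
    rw [PadicInt.norm_int_lt_one_iff_dvd] at h'
    have := Nat.le_of_dvd (Nat.pos_of_ne_zero hp1) (by exact_mod_cast h')
    omega
  let F : Polynomial ℤ_[p] := Polynomial.X ^ (p - 1) - 1
  have hF' : ‖Polynomial.aeval a F.derivative‖ = 1 := by
    simp [F, Polynomial.derivative_X_pow, hna, hnp, -Nat.cast_sub, -Nat.cast_pred]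
  obtain ⟨z, hz, hza, -, -⟩ := hensels_lemma (F := F) (a := a) (by
    rw [hF', one_pow]; simpa [F] using hF)
  rw [hF'] at hza
  have hz1 : z ^ (p - 1) = 1 := by
    simpa [F, sub_eq_zero] using hz
  let w : ℤ_[p]ˣ := Units.ofPowEqOne z (p - 1) hz1 hp1
  have hw : w ∈ CommGroup.torsion ℤ_[p]ˣ := by
    show IsOfFinOrder w
    exact isOfFinOrder_iff_pow_eq_one.mpr ⟨p - 1, Nat.pos_of_ne_zero hp1, Units.pow_ofPowEqOne hz1 hp1⟩
  refine ⟨⟨w, hw⟩, Units.ext ?_⟩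
  show φ z = u
  rw [← ha, ← sub_eq_zero, ← map_sub, hker]
  exact hza

lemma aux_card (p : ℕ) [hp : Fact p.Prime] (h2 : p ≠ 2) :
    Nat.card (CommGroup.torsion ℤ_[p]ˣ) = p - 1 := by
  have : NeZero (p ^ 1) := ⟨pow_ne_zero _ hp.out.ne_zero⟩
  rw [Nat.card_eq_of_bijective _ ⟨aux_inj p 1 one_ne_zero (fun h => absurd h h2), aux_surj p⟩,
    Nat.card_eq_fintype_card, ZMod.card_units_eq_totient, pow_one, Nat.totient_prime hp.out]

/-- There is an isomorphism of topological groups `∏_p T_p ≅ ∏_{n ≥ 1} ℤ/nℤ`, where `T_p` is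
the torsion subgroup of `ℤ_pˣ`, the left product is over all primes `p` and the right product
is over all positive integers `n`, both carrying the product topology. -/
theorem prod_torsion_padicUnits_iso_prod_zmod :
    ∃ e : (Π p : Nat.Primes, (CommGroup.torsion ℤ_[(p : ℕ)]ˣ : Subgroup _)) ≃*
        Multiplicative (Π n : ℕ+, ZMod (n : ℕ)),
      Continuous e ∧ Continuous e.symm := by
  have hfin : ∀ p : Nat.Primes, Finite (CommGroup.torsion ℤ_[(p : ℕ)]ˣ) := fun p => aux_finite p
  let m : Nat.Primes → ℕ := fun p => Nat.card (CommGroup.torsion ℤ_[(p : ℕ)]ˣ)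
  obtain ⟨E⟩ := aux_main m (fun n : ℕ+ => (n : ℕ)) (fun p => Nat.card_pos.ne') (fun n => n.ne_zero)
    (fun q k hq hk => (aux_primes q k hq hk).mono (by
      rintro p ⟨hp2, hp⟩
      show (Nat.card (CommGroup.torsion ℤ_[(p : ℕ)]ˣ)).factorization q = k
      rw [aux_card p hp2]
      exact hp))
    (fun q k hq _ => aux_pnat q k hq)
  have hcyc : ∀ p : Nat.Primes, IsCyclic (CommGroup.torsion ℤ_[(p : ℕ)]ˣ) :=
    fun p => isCyclic_subgroup_units _
  let g : ∀ p : Nat.Primes, Multiplicative (ZMod (m p)) ≃* (CommGroup.torsion ℤ_[(p : ℕ)]ˣ) :=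
    fun p => zmodCyclicMulEquiv (hcyc p)
  let e : (Π p : Nat.Primes, (CommGroup.torsion ℤ_[(p : ℕ)]ˣ : Subgroup _)) ≃*
      Multiplicative (Π n : ℕ+, ZMod (n : ℕ)) :=
    { toFun := fun v => Multiplicative.ofAdd (E fun p => ((g p).symm (v p)).toAdd)
      invFun := fun w => fun p => g p (Multiplicative.ofAdd (E.symm w.toAdd p))
      left_inv := fun v => by
        funext p
        simp
      right_inv := fun w => by
        simp
      map_mul' := fun v w => by
        have : (fun p => ((g p).symm ((v * w) p)).toAdd) =
          (fun p => ((g p).symm (v p)).toAdd) + (fun p => ((g p).symm (w p)).toAdd) := by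
          funext p
          simp
        rw [this, map_add, ofAdd_add] }
  refine ⟨e, ?_, ?_⟩
  · refine continuous_ofAdd.comp (E.continuous_toFun.comp (continuous_pi fun p => ?_))
    exact (continuous_of_discreteTopology (f := fun x => ((g p).symm x).toAdd)).comp
      (continuous_apply p)
  · refine continuous_pi fun p => ?_
    exact (continuous_of_discreteTopology (f := fun x => g p (Multiplicative.ofAdd x))).comp
      ((continuous_apply p).comp (E.continuous_invFun.comp continuous_toAdd))
end
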